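/- Let p be a prime, let f ∈ F_p[X,Y] be an irreducible polynomial of total degree 3, and let g ∈ F_p[X,Y] be a nonzero polynomial of total degree at most 2. Then |Z(f) ∩ Z(g)| ≤ 6. In particular, no seven points of an irreducible cubic curve lie on a common conic. -/

import Mathlib

/-!
Write `V d` for the space of polynomials in two variables of total degree at most `d`, of dimension
`(d + 1) * (d + 2) / 2`. Let `f` and `g` be coprime of degrees `m` and `n`, and let `S` be a finite
set of common zeros. For large `N`, Lagrange interpolation shows that vanishing on `S` imposes `#S`
independent conditions on `V (N + m + n)`. The subspace `f * V (N + n) + g * V (N + m)` satisfies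
all of them. Its two summands meet in `f * g * V N` because `f` and `g` are coprime, so
`#S ≤ dim V (N + m + n) - dim V (N + n) - dim V (N + m) + dim V N = m * n`.
-/

noncomputable section

def zeroSet {p : ℕ} (f : MvPolynomial (Fin 2) (ZMod p)) : Set (Fin 2 → ZMod p) :=
  {x | MvPolynomial.eval x f = 0}

open MvPolynomial Module

section Dimension

lemma sum_range_succ_multichoose (k d : ℕ) :
    ∑ i ∈ Finset.range (d + 1), k.multichoose i = (k + 1).multichoose d := by
  induction d with
  | zero => simp
  | succ d ih => rw [Finset.sum_range_succ, ih, Nat.multichoose_succ_succ, add_comm]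

variable {R : Type*} [CommRing R] [Nontrivial R]

theorem finrank_restrictTotalDegree (σ : Type*) [Fintype σ] (d : ℕ) :
    finrank R (restrictTotalDegree σ R d) = (Fintype.card σ + d).choose d := by
  classical
  have exponents_eq : {a : σ →₀ ℕ | (a.sum fun _ e => e) ≤ d} =
      ((Finset.range (d + 1)).biUnion Finset.univ.finsuppAntidiag : Finset (σ →₀ ℕ)) := by
    ext a
    simp [Finsupp.sum_fintype]
  have disjoint_degrees : (Finset.range (d + 1) : Set ℕ).PairwiseDisjoint
      (Finset.univ : Finset σ).finsuppAntidiag :=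
    fun i _ j _ hij => Finset.disjoint_left.2 fun a hi hj =>
      hij ((Finset.mem_finsuppAntidiag.1 hi).1.symm.trans (Finset.mem_finsuppAntidiag.1 hj).1)
  calc
    finrank R (restrictTotalDegree σ R d)
      = Nat.card {a : σ →₀ ℕ | (a.sum fun _ e => e) ≤ d} :=
        finrank_eq_nat_card_basis (basisRestrictSupport R _)
    _ = ∑ i ∈ Finset.range (d + 1), (Fintype.card σ).multichoose i := by
        rw [exponents_eq, Nat.card_coe_set_eq, Set.ncard_coe_finset,
          Finset.card_biUnion disjoint_degrees]
        simp only [Finset.card_finsuppAntidiag_nat_eq_multichoose, Finset.card_univ]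
    _ = (Fintype.card σ + d).choose d := by
        rw [sum_range_succ_multichoose, Nat.multichoose_eq, Nat.add_right_comm,
          Nat.add_sub_cancel]

lemma two_mul_finrank_restrictTotalDegree_fin_two (d : ℕ) :
    2 * finrank R (restrictTotalDegree (Fin 2) R d) = (d + 1) * (d + 2) := by
  rw [finrank_restrictTotalDegree, Fintype.card_fin, add_comm 2 d, Nat.choose_symm_add, mul_comm,
    ← Nat.add_one_mul_choose_eq (d + 1) 1, Nat.choose_one_right, mul_comm]

end Dimension

section Interpolation

theorem exists_totalDegree_le_card_eval_ne_zero {σ R : Type*} [CommRing R] [IsDomain R]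
    {x : σ → R} {s : Finset (σ → R)} (hx : x ∉ s) :
    ∃ q : MvPolynomial σ R, q.totalDegree ≤ s.card ∧ eval x q ≠ 0 ∧ ∀ y ∈ s, eval y q = 0 := by
  classical
  induction s using Finset.induction_on with
  | empty => exact ⟨1, by simp⟩
  | insert z s hz ih =>
    rw [Finset.mem_insert, not_or] at hx
    obtain ⟨q, hdeg, hqx, hqs⟩ := ih hx.2
    obtain ⟨i, hi⟩ := Function.ne_iff.1 hx.1
    refine ⟨(X i - C (z i)) * q, ?_, ?_, ?_⟩
    · calc
        ((X i - C (z i)) * q).totalDegree ≤ (X i - C (z i)).totalDegree + q.totalDegree :=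
          totalDegree_mul _ _
        _ ≤ 1 + s.card :=
          add_le_add ((totalDegree_sub_C_le _ _).trans_eq (totalDegree_X i)) hdeg
        _ = (insert z s).card := by rw [Finset.card_insert_of_notMem hz, add_comm]
    · simpa [sub_eq_zero] using ⟨hi, hqx⟩
    · simpa using fun y hy => Or.inr (hqs y hy)

variable {σ K : Type*} [Field K]

/-- Evaluation of polynomials at the points of `S`, as a linear map to the functions on `S`. -/
def evalOn (S : Finset (σ → K)) : MvPolynomial σ K →ₗ[K] (S → K) :=
  LinearMap.funLeft K K Subtype.val ∘ₗ evalₗ K σ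

lemma evalOn_apply (S : Finset (σ → K)) (q : MvPolynomial σ K) (x : S) :
    evalOn S q x = eval x.1 q :=
  rfl

lemma mem_ker_evalOn {S : Finset (σ → K)} {q : MvPolynomial σ K} :
    q ∈ LinearMap.ker (evalOn S) ↔ ∀ x ∈ S, eval x q = 0 := by
  simp [LinearMap.mem_ker, funext_iff, evalOn_apply]

theorem map_evalOn_restrictTotalDegree {S : Finset (σ → K)} {d : ℕ} (hd : S.card ≤ d + 1) :
    (restrictTotalDegree σ K d).map (evalOn S) = ⊤ := by
  classical
  have h_indicator : ∀ x : S, ∃ q ∈ restrictTotalDegree σ K d, evalOn S q = Pi.single x 1 := by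
    intro x
    obtain ⟨q, hdeg, hqx, hq⟩ :=
      exists_totalDegree_le_card_eval_ne_zero (Finset.notMem_erase x.1 S)
    rw [Finset.card_erase_of_mem x.2] at hdeg
    have hq_mem : q ∈ restrictTotalDegree σ K d :=
      (mem_restrictTotalDegree _ _ _).2 (by omega)
    refine ⟨(eval x.1 q)⁻¹ • q, Submodule.smul_mem _ _ hq_mem, ?_⟩
    ext y
    rcases eq_or_ne y x with rfl | hyx
    · simp [evalOn_apply, hqx]
    · simp [evalOn_apply, hyx, hq y.1 (Finset.mem_erase.2 ⟨Subtype.coe_ne_coe.2 hyx, y.2⟩)]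
  rw [eq_top_iff, ← (Pi.basisFun K S).span_eq, Submodule.span_le]
  rintro _ ⟨x, rfl⟩
  obtain ⟨q, hq_mem, hq⟩ := h_indicator x
  exact ⟨q, hq_mem, by rw [hq, Pi.basisFun_apply]⟩

theorem card_add_finrank_le_finrank_restrictTotalDegree [Finite σ] {S : Finset (σ → K)} {d : ℕ}
    (hd : S.card ≤ d + 1) {W : Submodule K (MvPolynomial σ K)}
    (hWd : W ≤ restrictTotalDegree σ K d) (hWS : W ≤ LinearMap.ker (evalOn S)) :
    S.card + finrank K W ≤ finrank K (restrictTotalDegree σ K d) := by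
  let ev := (evalOn S).domRestrict (restrictTotalDegree σ K d)
  have h_range : finrank K (LinearMap.range ev) = S.card := by
    rw [LinearMap.range_domRestrict, map_evalOn_restrictTotalDegree hd, finrank_top,
      finrank_fintype_fun_eq_card, Fintype.card_coe]
  have h_ker : finrank K W ≤ finrank K (LinearMap.ker ev) :=
    (Submodule.submoduleOfEquivOfLe hWd).finrank_eq.ge.trans <|
      Submodule.finrank_mono fun q hq => hWS hq
  rw [← ev.finrank_range_add_finrank_ker, h_range]
  exact Nat.add_le_add_left h_ker _

end Interpolation

section Bezout

lemma isRelPrime_of_irreducible_of_totalDegree_lt {σ R : Type*} [CommSemiring R]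
    [NoZeroDivisors R] {f g : MvPolynomial σ R} (hf : Irreducible f) (hg : g ≠ 0)
    (hdeg : g.totalDegree < f.totalDegree) : IsRelPrime f g := by
  refine hf.isRelPrime_iff_not_dvd.2 ?_
  rintro ⟨c, rfl⟩
  rw [totalDegree_mul_of_isDomain hf.ne_zero (right_ne_zero_of_mul hg)] at hdeg
  omega

variable {σ K : Type*} [Field K]

/-- The products of `f` with the polynomials of total degree at most `d`: the part of the ideal
`(f)` whose cofactors have bounded degree, as a vector space. -/
def multiples (f : MvPolynomial σ K) (d : ℕ) : Submodule K (MvPolynomial σ K) :=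
  (restrictTotalDegree σ K d).map (LinearMap.mulLeft K f)

instance [Finite σ] (f : MvPolynomial σ K) (d : ℕ) : FiniteDimensional K (multiples f d) :=
  Module.Finite.map _ _

lemma finrank_multiples {f : MvPolynomial σ K} (hf : f ≠ 0) (d : ℕ) :
    finrank K (multiples f d) = finrank K (restrictTotalDegree σ K d) :=
  (Submodule.equivMapOfInjective _ (mul_right_injective₀ hf) _).finrank_eq.symm

lemma multiples_le_restrictTotalDegree (f : MvPolynomial σ K) (d : ℕ) :
    multiples f d ≤ restrictTotalDegree σ K (f.totalDegree + d) := by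
  rintro _ ⟨a, ha, rfl⟩
  rw [SetLike.mem_coe, mem_restrictTotalDegree] at ha
  exact (mem_restrictTotalDegree _ _ _).2 ((totalDegree_mul f a).trans (by gcongr))

lemma multiples_le_ker_evalOn {f : MvPolynomial σ K} {S : Finset (σ → K)}
    (hfS : ∀ x ∈ S, eval x f = 0) (d : ℕ) : multiples f d ≤ LinearMap.ker (evalOn S) := by
  rintro _ ⟨a, -, rfl⟩
  exact mem_ker_evalOn.2 fun x hx => by simp [hfS x hx]

theorem multiples_inf_multiples_le {f g : MvPolynomial σ K} (hfg : IsRelPrime f g)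
    (hg : g ≠ 0) (N d : ℕ) :
    multiples f (g.totalDegree + N) ⊓ multiples g d ≤ multiples (f * g) N := by
  rintro _ ⟨⟨a, ha, rfl⟩, ⟨b, -, hab⟩⟩
  rw [SetLike.mem_coe, mem_restrictTotalDegree] at ha
  obtain ⟨c, rfl⟩ : g ∣ a := hfg.symm.dvd_of_dvd_mul_left ⟨b, hab.symm⟩
  refine ⟨c, (mem_restrictTotalDegree _ _ _).2 ?_, mul_assoc f g c⟩
  rcases eq_or_ne c 0 with rfl | hc
  · simp
  · rw [totalDegree_mul_of_isDomain hg hc] at ha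
    omega

theorem finrank_add_finrank_le_finrank_sup_multiples [Finite σ] {f g : MvPolynomial σ K}
    (hfg : IsRelPrime f g) (hf : f ≠ 0) (hg : g ≠ 0) (N d : ℕ) :
    finrank K (restrictTotalDegree σ K (g.totalDegree + N)) +
        finrank K (restrictTotalDegree σ K d) ≤
      finrank K ↥(multiples f (g.totalDegree + N) ⊔ multiples g d) +
        finrank K (restrictTotalDegree σ K N) := by
  rw [← finrank_multiples hf, ← finrank_multiples hg, ← finrank_multiples (mul_ne_zero hf hg) N,
    ← Submodule.finrank_sup_add_finrank_inf_eq]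
  exact Nat.add_le_add_left (Submodule.finrank_mono (multiples_inf_multiples_le hfg hg N d)) _

end Bezout

section Plane

variable {K : Type*} [Field K]

theorem card_le_totalDegree_mul_totalDegree {f g : MvPolynomial (Fin 2) K} (hfg : IsRelPrime f g)
    (hf : f ≠ 0) (hg : g ≠ 0) {S : Finset (Fin 2 → K)} (hfS : ∀ x ∈ S, eval x f = 0)
    (hgS : ∀ x ∈ S, eval x g = 0) : S.card ≤ f.totalDegree * g.totalDegree := by
  set m := f.totalDegree
  set n := g.totalDegree
  set N := S.card
  have h_conditions : N + finrank K ↥(multiples f (n + N) ⊔ multiples g (m + N)) ≤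
      finrank K (restrictTotalDegree (Fin 2) K (m + (n + N))) := by
    refine card_add_finrank_le_finrank_restrictTotalDegree (by omega) (sup_le ?_ ?_)
      (sup_le (multiples_le_ker_evalOn hfS _) (multiples_le_ker_evalOn hgS _))
    · exact multiples_le_restrictTotalDegree f (n + N)
    · rw [Nat.add_left_comm]
      exact multiples_le_restrictTotalDegree g (m + N)
  have h_sup := finrank_add_finrank_le_finrank_sup_multiples hfg hf hg N (m + N)
  have dim := two_mul_finrank_restrictTotalDegree_fin_two (R := K)
  linarith [dim N, dim (n + N), dim (m + N), dim (m + (n + N))]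

theorem bezout_cubic_conic_general {f g : MvPolynomial (Fin 2) K} (hfg : IsRelPrime f g) :
    {x | eval x f = 0 ∧ eval x g = 0}.encard ≤ (f.totalDegree * g.totalDegree : ℕ) := by
  rcases eq_or_ne f 0 with rfl | hf
  · have hg_unit := isRelPrime_zero_left.1 hfg
    simp [fun x => (hg_unit.map (eval x)).ne_zero]
  rcases eq_or_ne g 0 with rfl | hg
  · have hf_unit := isRelPrime_zero_right.1 hfg
    simp [fun x => (hf_unit.map (eval x)).ne_zero]
  by_contra! h_lt
  obtain ⟨S, hS, hS_card⟩ := Set.exists_subset_encard_eq (Order.add_one_le_of_lt h_lt)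
  lift S to Finset (Fin 2 → K) using Set.finite_of_encard_eq_coe hS_card
  rw [Set.encard_coe_eq_coe_finsetCard] at hS_card
  have h_card := card_le_totalDegree_mul_totalDegree hfg hf hg
    (fun x hx => (hS hx).1) (fun x hx => (hS hx).2)
  norm_cast at hS_card
  omega

end Plane

theorem bezout_cubic_conic
    (p : ℕ) (hp : p.Prime) (f g : MvPolynomial (Fin 2) (ZMod p))
    (hf : Irreducible f) (hfdeg : f.totalDegree = 3)
    (hg : g ≠ 0) (hgdeg : g.totalDegree ≤ 2) :
    (zeroSet f ∩ zeroSet g).ncard ≤ 6 := by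
  have : Fact p.Prime := ⟨hp⟩
  have hfg := isRelPrime_of_irreducible_of_totalDegree_lt hf hg (by omega)
  have h_bezout := ENat.toNat_le_of_le_natCast (bezout_cubic_conic_general hfg)
  exact h_bezout.trans (by rw [hfdeg]; omega)
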